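/- Let n ≥ 2 be an integer, F a totally real number field of degree n embedded in ℝ^n via a fixed ordering of its real embeddings, E₊ its group of totally positive units, and π ∈ F a totally positive element with π_H = (σ₁(π)⋯σ_n(π))^{−1/n}·(σ₁(π),…,σ_n(π)) ∈ ℝ_{>0}^n. Then there exist real numbers R_f, R_g, M_f, M_g > 0, totally positive units f₁,…,f_{n−1}, g₁,…,g_{n−1} ∈ E₊, and elements f_π, g_π ∈ π_H·E₊, such that: (1) ‖Log(f_i) − l_i(M_f)‖_∞ < R_f and ‖Log(g_i) − l_i(M_g)‖_∞ < R_g for i = 1,…,n−1, and ‖Log(f_π) − l_0(M_f)‖_∞ < R_f, ‖Log(g_π) − l_0(M_g)‖_∞ < R_g; (2) the subgroups V_f = ⟨f₁,…,f_{n−1}⟩ and V_g = ⟨g₁,…,g_{n−1}⟩ both have finite index in E₊ and the indices [E₊ : V_f] and [E₊ : V_g] are coprime; (3) writing f_n = f_π and g_n = g_π, for every permutation τ of {1,…,n} one has δ([f_{τ(1)} | ⋯ | f_{τ(n−1)}]) = sign(τ) and δ([g_{τ(1)} | ⋯ | g_{τ(n−1)}]) = sign(τ). -/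

import Mathlib

/-!
The index condition and the size condition can be met together because `Log E₊` is a lattice of full
rank in the hyperplane of vectors with coordinate sum zero, and so is `m · Log E₊` for each `m ≥ 1`.

Fix `m ≥ 2` and elements `e₁, …, e_{n-1}` generating `E₊` (`exists_generators`). Each coset
`e_i · E₊ᵐ`, and likewise `π_H · E₊ᵐ`, contains for *every* `M` a point whose logarithm is within a
constant `R = R(m)` of `l_i(M)`, resp. `l_0(M)` (`exists_pow_near`). So `f_i ∈ e_i · E₊ᵐ` and `f_π`
may be chosen with `M` as large as desired compared with `R`. Since the `f_i` generate `E₊` modulo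
`m`-th powers, Nakayama's lemma for the `ℤ`-module `E₊ / V_f` shows that `V_f` has finite index
coprime to `m` (`index_coprime_of_pow_surj`); no independence of the `f_i` is needed beforehand.
Taking `m = 2` gives the `f_i`, with some index `d`, and taking `m = 2d` gives the `g_i`, with index
coprime to `d`.

The sign condition holds as soon as `M ≥ 2n²R + n!`. For `τ = 1` the entry in row `i`, column `k ≥ 1`
(counting from `0`) of the chain has a logarithm close to `-kM/(n-1)`, plus `Mn/(n-1)` exactly when
`1 ≤ i ≤ k`. Only the identity permutation picks a large entry in every column `k ≥ 1`
(`perm_eq_one_of_le`), so the diagonal term dominates the Leibniz expansion and the determinant is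
positive (`det_chain_pos`). A general `τ` reduces to this case by permuting the rows by the conjugate
of `τ` under the `n`-cycle `s ↦ s + 1` (`permSignCond_of_near`).
-/


noncomputable section

/-- The image in `F` of a unit of the ring of integers of `F`. -/
def uval (F : Type) [Field F] [NumberField F]
    (u : (NumberField.RingOfIntegers F)ˣ) : F :=
  algebraMap (NumberField.RingOfIntegers F) F (u : NumberField.RingOfIntegers F)

/-- The embedding of `F` into `ℝ^n` given by the ordered real embeddings `σ`. -/
def emb (n : ℕ) (F : Type) [Field F] (σ : Fin n → (F →+* ℝ)) (x : F) :
    Fin n → ℝ := fun i => σ i x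

/-- The group `E₊` of totally positive units of the ring of integers of `F`. -/
def totPosUnits (n : ℕ) (F : Type) [Field F] [NumberField F]
    (σ : Fin n → (F →+* ℝ)) : Subgroup (NumberField.RingOfIntegers F)ˣ where
  carrier := {u | ∀ i, 0 < σ i (uval F u)}
  one_mem' := by intro i; simp [uval]
  mul_mem' := by
    intro a b ha hb i
    have h : uval F (a * b) = uval F a * uval F b := by
      simp [uval, Units.val_mul, map_mul]
    rw [h, map_mul]
    exact mul_pos (ha i) (hb i)
  inv_mem' := by
    intro a ha i
    have h : uval F a * uval F a⁻¹ = 1 := by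
      simp [uval, ← map_mul, ← Units.val_mul]
    have h2 : σ i (uval F a) * σ i (uval F a⁻¹) = 1 := by
      rw [← map_mul, h, map_one]
    nlinarith [ha i, h2]

/-- Componentwise logarithm `Log : ℝ_{>0}^n → ℝ^n`. -/
def vlog (n : ℕ) (v : Fin n → ℝ) : Fin n → ℝ := fun i => Real.log (v i)

/-- The vector `l_i(M) ∈ ℝ^n` whose coordinate `i` (0-based) equals `M` and whose
other coordinates all equal `−M/(n−1)`. -/
def lvec (n : ℕ) (M : ℝ) (i : ℕ) : Fin n → ℝ :=
  fun j => if (j : ℕ) = i then M else -M / ((n : ℝ) - 1)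

/-- `δ(x₁,…,x_n)`: the sign of the determinant of the matrix with columns `x₁,…,x_n`. -/
def signdet (n : ℕ) (xs : Fin n → Fin n → ℝ) : ℝ :=
  Real.sign (Matrix.of fun j i : Fin n => xs i j).det

/-- The homogeneous chain `[x₁ | ⋯ | x_{n−1}] = (1, x₁, x₁x₂, …, x₁⋯x_{n−1})`,
products taken componentwise. -/
def chain (n : ℕ) (x : Fin (n - 1) → Fin n → ℝ) : Fin n → Fin n → ℝ :=
  fun k j => ∏ t : Fin (n - 1), if (t : ℕ) < (k : ℕ) then x t j else 1

/-- The vector `π_H = (σ₁(π)⋯σ_n(π))^{−1/n}·(σ₁(π),…,σ_n(π))`. -/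
def piH (n : ℕ) (F : Type) [Field F] (σ : Fin n → (F →+* ℝ)) (π : F) :
    Fin n → ℝ :=
  fun i => (∏ j, σ j π) ^ (-(1 : ℝ) / (n : ℝ)) * σ i π

/-- `gπ` belongs to the set `π_H·E₊ ⊂ ℝ_{>0}^n`. -/
def inPiHOrbit (n : ℕ) (F : Type) [Field F] [NumberField F]
    (σ : Fin n → (F →+* ℝ)) (π : F) (gπ : Fin n → ℝ) : Prop :=
  ∃ ε : (NumberField.RingOfIntegers F)ˣ, ε ∈ totPosUnits n F σ ∧
    gπ = fun i => piH n F σ π i * σ i (uval F ε)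

/-- The family `g₁,…,g_{n−1},g_n` of vectors in `ℝ^n`, where `g_n = g_π`. -/
def gfull (n : ℕ) (F : Type) [Field F] [NumberField F]
    (σ : Fin n → (F →+* ℝ)) (g : Fin (n - 1) → (NumberField.RingOfIntegers F)ˣ)
    (gπ : Fin n → ℝ) : Fin n → Fin n → ℝ :=
  fun k => if h : (k : ℕ) < n - 1 then emb n F σ (uval F (g ⟨(k : ℕ), h⟩)) else gπ

/-- For every permutation `τ` of `{1,…,n}`,
`δ([w_{τ(1)} | ⋯ | w_{τ(n−1)}]) = sign(τ)`. -/
def permSignCond (n : ℕ) (w : Fin n → Fin n → ℝ) : Prop :=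
  ∀ τ : Equiv.Perm (Fin n),
    signdet n (chain n (fun t => w (τ (Fin.castLE (Nat.sub_le n 1) t))))
      = ((Equiv.Perm.sign τ : ℤ) : ℝ)

open NumberField

/-! ### Subgroups that are everything modulo `m`-th powers -/

/-- A subgroup of a finitely generated abelian group which surjects onto the quotient by `m`-th
powers has finite index coprime to `m`: by Nakayama's lemma the quotient is killed by an integer
congruent to `1` modulo `m`. -/
lemma index_coprime_of_pow_surj {G : Type*} [CommGroup G] [Group.FG G] (H : Subgroup G)
    (m : ℕ) (hm : 2 ≤ m) (h : ∀ g : G, ∃ a ∈ H, ∃ x : G, g = a * x ^ m) :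
    H.FiniteIndex ∧ Nat.Coprime H.index m := by
  have hdiv : ∀ q : G ⧸ H, ∃ q', q = q' ^ m := by
    intro q
    obtain ⟨g, rfl⟩ := QuotientGroup.mk_surjective q
    obtain ⟨a, ha, x, rfl⟩ := h g
    refine ⟨(x : G ⧸ H), ?_⟩
    rw [QuotientGroup.mk_mul, (QuotientGroup.eq_one_iff a).2 ha, one_mul, QuotientGroup.mk_pow]
  have : Group.FG (G ⧸ H) := inferInstance
  have : Module.Finite ℤ (Additive (G ⧸ H)) :=
    Module.Finite.iff_addGroup_fg.mpr inferInstance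
  obtain ⟨r, hr, hr0⟩ := Submodule.exists_sub_one_mem_and_smul_eq_zero_of_fg_of_le_smul
    (Ideal.span {(m : ℤ)}) (⊤ : Submodule ℤ (Additive (G ⧸ H))) Module.Finite.fg_top (by
      intro q _
      obtain ⟨q', hq'⟩ := hdiv q.toMul
      have : q = (m : ℤ) • Additive.ofMul q' := by
        rw [natCast_zsmul, ← ofMul_pow, ← hq']; rfl
      rw [this]
      exact Submodule.smul_mem_smul (Ideal.mem_span_singleton_self _) trivial)
  rw [Ideal.mem_span_singleton] at hr
  obtain ⟨c, hc⟩ := hr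
  have hr' : r ≠ 0 := by
    rintro rfl
    have : (m : ℤ) ∣ 1 := ⟨-c, by linarith⟩
    have := Int.le_of_dvd one_pos this
    omega
  have hz : ∀ q : G ⧸ H, q ^ r = 1 := fun q => by
    have := hr0 (Additive.ofMul q) trivial
    rw [← ofMul_zpow] at this
    exact this
  have : Finite (G ⧸ H) := CommGroup.finite_of_fg_isMulTorsion _ (fun q =>
    isOfFinOrder_iff_zpow_eq_one.2 ⟨r, hr', hz q⟩)
  refine ⟨Subgroup.finiteIndex_of_finite_quotient, ?_⟩
  rw [Subgroup.index_eq_card]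
  refine Nat.coprime_of_dvd fun p hp hpQ hpm => ?_
  have := Fact.mk hp
  obtain ⟨q, hq⟩ := exists_prime_orderOf_dvd_card' p hpQ
  have h1 : (p : ℤ) ∣ r := by
    rw [← hq]; exact orderOf_dvd_iff_zpow_eq_one.2 (hz q)
  have h2 : (p : ℤ) ∣ (m : ℤ) * c := (Int.natCast_dvd_natCast.2 hpm).mul_right c
  have h3 : (p : ℤ) ∣ 1 := by
    have := dvd_sub h1 (hc ▸ h2)
    simpa using this
  exact hp.one_lt.ne' (by exact_mod_cast Int.eq_one_of_dvd_one (by positivity) h3)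


/-! ### The logarithmic lattice of totally positive units -/

/-- The infinite place of `F` attached to a real embedding. -/
def realPlace {F : Type} [Field F] (φ : F →+* ℝ) : InfinitePlace F :=
  InfinitePlace.mk (Complex.ofRealHom.comp φ)

lemma realPlace_apply {F : Type} [Field F] (φ : F →+* ℝ) (x : F) : realPlace φ x = |φ x| := by
  simp [realPlace, InfinitePlace.apply]

lemma isReal_ofReal_comp {F : Type} [Field F] (φ : F →+* ℝ) :
    ComplexEmbedding.IsReal (Complex.ofRealHom.comp φ) := by
  rw [ComplexEmbedding.isReal_iff]
  ext x
  simp [ComplexEmbedding.conjugate_coe_eq]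

lemma realPlace_isReal {F : Type} [Field F] (φ : F →+* ℝ) : (realPlace φ).IsReal :=
  ⟨_, isReal_ofReal_comp φ, rfl⟩

lemma realPlace_injective {F : Type} [Field F] : Function.Injective (realPlace (F := F)) := by
  intro φ ψ h
  have h' : Complex.ofRealHom.comp φ = Complex.ofRealHom.comp ψ := by
    rcases InfinitePlace.mk_eq_iff.1 h with h | h
    · exact h
    · rwa [ComplexEmbedding.isReal_iff.1 (isReal_ofReal_comp φ)] at h
  ext x
  have := RingHom.congr_fun h' x
  simpa using this

lemma card_place_le {n : ℕ} {F : Type} [Field F] [NumberField F]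
    (hdeg : Module.finrank ℚ F = n) : Fintype.card (InfinitePlace F) ≤ n := by
  rw [InfinitePlace.card_eq_nrRealPlaces_add_nrComplexPlaces]
  have := InfinitePlace.card_add_two_mul_card_eq_rank F
  omega

lemma realPlace_bijective {n : ℕ} {F : Type} [Field F] [NumberField F] {σ : Fin n → (F →+* ℝ)}
    (hdeg : Module.finrank ℚ F = n) (hinj : Function.Injective σ) :
    Function.Bijective fun i => realPlace (σ i) := by
  have h : Function.Injective fun i => realPlace (σ i) := realPlace_injective.comp hinj
  refine (Fintype.bijective_iff_injective_and_card _).2 ⟨h, ?_⟩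
  refine le_antisymm (Fintype.card_le_of_injective _ h) ?_
  simpa using card_place_le hdeg

lemma sum_log_unit {n : ℕ} {F : Type} [Field F] [NumberField F] {σ : Fin n → (F →+* ℝ)}
    (hdeg : Module.finrank ℚ F = n) (hinj : Function.Injective σ) (u : (𝓞 F)ˣ) :
    ∑ i, Real.log (σ i (uval F u)) = 0 := by
  rw [← Units.sum_mult_mul_log u]
  refine Fintype.sum_bijective _ (realPlace_bijective hdeg hinj) _ _ fun i => ?_
  rw [(realPlace_isReal _).mult_eq_one, realPlace_apply, Real.log_abs]
  simp [uval]

/-- Dirichlet's unit theorem, as cocompactness: the logarithms of all units form a lattice of full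
rank in the hyperplane of vectors with sum zero, hence come uniformly close to each such vector.
(`Real.log` ignores signs, so units of any signature are covered.) -/
lemma exists_unit_near {n : ℕ} {F : Type} [Field F] [NumberField F] {σ : Fin n → (F →+* ℝ)}
    (hdeg : Module.finrank ℚ F = n) (hinj : Function.Injective σ) :
    ∃ R : ℝ, ∀ v : Fin n → ℝ, ∑ i, v i = 0 →
      ∃ u : (𝓞 F)ˣ, ∀ i, |Real.log (σ i (uval F u)) - v i| ≤ R := by
  classical
  let e := Equiv.ofBijective _ (realPlace_bijective hdeg hinj)
  let b := (Units.basisUnitLattice F).ofZLatticeBasis ℝ (Units.unitLattice F)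
  set C := ∑ i, ‖b i‖ with hC
  have hC0 : 0 ≤ C := Finset.sum_nonneg fun i _ => norm_nonneg _
  refine ⟨C + n * C, fun v hv => ?_⟩
  let v' : Units.dirichletUnitTheorem.logSpace F := fun w => v (e.symm w)
  have hmem : (ZSpan.floor b v' : Units.dirichletUnitTheorem.logSpace F) ∈ Units.unitLattice F := by
    rw [← (Units.basisUnitLattice F).ofZLatticeBasis_span ℝ]
    exact (ZSpan.floor b v').2
  obtain ⟨u, -, hu⟩ := hmem
  -- The log space omits the distinguished place `w₀`; that coordinate is bounded through the sum.
  refine ⟨u.toMul, ?_⟩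
  set d : Fin n → ℝ := fun i => Real.log (σ i (uval F u.toMul)) - v i with hd
  have hsum : ∑ i, d i = 0 := by
    simp only [hd, Finset.sum_sub_distrib, hv, sum_log_unit hdeg hinj, sub_zero]
  have hne : ∀ i, e i ≠ Units.dirichletUnitTheorem.w₀ → |d i| ≤ C := by
    intro i hi
    have h1 : ‖ZSpan.fract b v' ⟨e i, hi⟩‖ ≤ C :=
      (norm_le_pi_norm _ _).trans (ZSpan.norm_fract_le b v')
    have h2 : ZSpan.fract b v' ⟨e i, hi⟩ = - d i := by
      rw [ZSpan.fract_apply, ← hu, Pi.sub_apply]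
      have h3 : (Units.logEmbedding F).toIntLinearMap u ⟨e i, hi⟩
          = Real.log (σ i (uval F u.toMul)) := by
        change ((e i).mult : ℝ) * Real.log (e i _) = _
        change ((realPlace (σ i)).mult : ℝ) * Real.log (realPlace (σ i) _) = _
        rw [(realPlace_isReal _).mult_eq_one, realPlace_apply, Real.log_abs]
        simp [uval]
      rw [h3]
      simp [v', hd]
    rwa [h2, norm_neg, Real.norm_eq_abs] at h1
  intro i
  change |d i| ≤ _
  by_cases hi : e i = Units.dirichletUnitTheorem.w₀
  · have h1 : d i = - ∑ j ∈ Finset.univ.erase i, d j := by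
      rw [← Finset.add_sum_erase _ _ (Finset.mem_univ i)] at hsum
      linarith
    have h2 : ∑ j ∈ Finset.univ.erase i, |d j| ≤ ∑ j ∈ Finset.univ.erase i, C :=
      Finset.sum_le_sum fun j hj => hne j fun h =>
        Finset.ne_of_mem_erase hj (e.injective (h.trans hi.symm))
    rw [h1, abs_neg]
    refine (Finset.abs_sum_le_sum_abs _ _).trans (h2.trans ?_)
    rw [Finset.sum_const, nsmul_eq_mul]
    have : ((Finset.univ.erase i).card : ℝ) ≤ n := by
      exact_mod_cast (Finset.card_le_univ _).trans (by simp)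
    nlinarith
  · have := hne i hi
    have : 0 ≤ n * C := by positivity
    linarith

/-- The group of totally positive units is generated by `n - 1` elements: being torsion-free it
embeds in the lattice of logarithms of units, whose rank is at most `n - 1`. -/
lemma exists_generators {n : ℕ} (hn : 2 ≤ n) {F : Type} [Field F] [NumberField F]
    {σ : Fin n → (F →+* ℝ)} (hdeg : Module.finrank ℚ F = n) :
    Group.FG (totPosUnits n F σ) ∧ ∃ e : Fin (n - 1) → totPosUnits n F σ,
      Subgroup.closure (Set.range e) = ⊤ := by
  let ψ : Additive (totPosUnits n F σ) →ₗ[ℤ] Units.unitLattice F :=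
    (((Units.logEmbedding F).comp
      (MonoidHom.toAdditive (totPosUnits n F σ).subtype)).toIntLinearMap).codRestrict
      (Units.unitLattice F) fun x => Submodule.mem_map_of_mem trivial
  have hψ : Function.Injective ψ := by
    rw [injective_iff_map_eq_zero]
    intro x h
    obtain ⟨u, hu⟩ := x
    have h0 : Units.logEmbedding F (Additive.ofMul u) = 0 := congrArg Subtype.val h
    have h1 := Units.dirichletUnitTheorem.logEmbedding_eq_zero_iff.1 h0
    rw [Units.mem_torsion] at h1
    have i : Fin n := ⟨0, by omega⟩
    have h2 : realPlace (σ i) (uval F u) = 1 := h1 _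
    rw [realPlace_apply, abs_of_pos (hu i)] at h2
    have h3 : uval F u = 1 := (σ i).injective (h2.trans (map_one _).symm)
    have h4 : u = 1 := by
      ext
      simpa [uval] using h3
    subst h4
    rfl
  obtain ⟨r, ⟨c⟩⟩ := (LinearMap.range ψ).nonempty_basis_of_pid (Units.basisUnitLattice F)
  let b := c.map (LinearEquiv.ofInjective ψ hψ).symm
  have hr : r ≤ n - 1 := by
    have : Module.Finite ℤ (Units.unitLattice F) := .of_basis (Units.basisUnitLattice F)
    have h1 := LinearMap.finrank_le_finrank_of_injective hψ
    rw [Module.finrank_eq_card_basis b, Units.unitLattice_rank, Fintype.card_fin] at h1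
    have := card_place_le hdeg
    unfold Units.rank at h1
    omega
  have hgen : Subgroup.closure (Set.range fun k => (b k).toMul) = ⊤ := by
    refine top_unique fun x _ => ?_
    have hx : Additive.ofMul x ∈ Submodule.span ℤ (Set.range b) := by
      rw [b.span_eq]; trivial
    suffices h : ∀ y ∈ Submodule.span ℤ (Set.range b),
        Additive.toMul y ∈ Subgroup.closure (Set.range fun k => (b k).toMul) from h _ hx
    intro y hy
    induction hy using Submodule.span_induction with
    | mem y hy =>
      obtain ⟨k, rfl⟩ := hy
      exact Subgroup.subset_closure ⟨k, rfl⟩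
    | zero => exact one_mem _
    | add y z _ _ hy hz => exact mul_mem hy hz
    | smul a y _ hy => exact zpow_mem hy a
  refine ⟨(Group.fg_iff).2 ⟨_, hgen, Set.finite_range _⟩, ?_⟩
  -- The family is padded with `1` in case the rank is smaller than `n - 1`.
  refine ⟨fun t => if h : (t : ℕ) < r then (b ⟨t, h⟩).toMul else 1, top_unique ?_⟩
  rw [← hgen, Subgroup.closure_le]
  rintro _ ⟨k, rfl⟩
  exact Subgroup.subset_closure ⟨⟨k, by omega⟩, by simp⟩

/-! ### Signs of determinants of chains -/

/-- Only the identity permutation puts, for every `k ≥ 1`, the image of `k` in `{1, …, k}`. -/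
lemma perm_eq_one_of_le {n : ℕ} (ρ : Equiv.Perm (Fin n))
    (h : ∀ k : Fin n, 1 ≤ (k : ℕ) → 1 ≤ (ρ k : ℕ) ∧ (ρ k : ℕ) ≤ k) : ρ = 1 := by
  have hle : ∀ k : Fin n, (ρ k : ℕ) ≤ k := by
    intro k
    rcases Nat.eq_zero_or_pos (k : ℕ) with hk | hk
    · obtain ⟨j, hj⟩ := ρ.surjective k
      rcases Nat.eq_zero_or_pos (j : ℕ) with hj0 | hj0
      · have : j = k := Fin.ext (hj0.trans hk.symm)
        rw [← this, hj, this]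
      · have := (h j hj0).1
        rw [hj] at this
        omega
    · exact (h k hk).2
  -- `ρ k ≤ k` for all `k`, and both sides have the same sum.
  have hsum : ∑ k, (ρ k : ℕ) = ∑ k : Fin n, (k : ℕ) := Equiv.sum_comp ρ fun k => (k : ℕ)
  have := (Finset.sum_eq_sum_iff_of_le fun k _ => hle k).1 hsum
  ext k
  exact this k (Finset.mem_univ k)

lemma chain_pos {n : ℕ} {y : Fin (n - 1) → Fin n → ℝ} (hy : ∀ t i, 0 < y t i) (k i : Fin n) :
    0 < chain n y k i := by
  refine Finset.prod_pos fun t _ => ?_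
  split_ifs
  · exact hy t i
  · exact one_pos

lemma log_chain {n : ℕ} {y : Fin (n - 1) → Fin n → ℝ} (hy : ∀ t i, 0 < y t i) (k i : Fin n) :
    Real.log (chain n y k i) =
      ∑ t : Fin (n - 1), if (t : ℕ) < (k : ℕ) then Real.log (y t i) else 0 := by
  unfold chain
  rw [Real.log_prod]
  · exact Finset.sum_congr rfl fun t _ => by split_ifs <;> simp
  · intro t _
    split_ifs
    · exact (hy t i).ne'
    · exact one_ne_zero

/-- In column `k ≥ 1` of the chain, the diagonal entry dominates: it is maximal up to bounded
factors, and exceeds by a factor of order `exp M` each entry outside the rows `1, …, k`. -/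
lemma log_chain_sub_le {n : ℕ} (hn : 2 ≤ n) {y : Fin (n - 1) → Fin n → ℝ} {R M : ℝ}
    (hR : 0 ≤ R) (hM : 0 ≤ M) (hy : ∀ t i, 0 < y t i)
    (hl : ∀ t i, |Real.log (y t i) - lvec n M ((t : ℕ) + 1) i| ≤ R) (k i : Fin n) :
    Real.log (chain n y k i) - Real.log (chain n y k k) ≤
      2 * n * R - if 1 ≤ (k : ℕ) ∧ ¬ (1 ≤ (i : ℕ) ∧ (i : ℕ) ≤ k) then M else 0 := by
  rw [log_chain hy, log_chain hy, ← Finset.sum_sub_distrib]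
  have hn1 : (0 : ℝ) < (n : ℝ) - 1 := by
    have : (2 : ℝ) ≤ n := by exact_mod_cast hn
    linarith
  -- `M'` is the gap `Mn/(n-1)` between the large and the small coordinates of `l_i(M)`.
  set M' : ℝ := M + M / ((n : ℝ) - 1) with hM'
  have hMM : M ≤ M' := by
    have : 0 ≤ M / ((n : ℝ) - 1) := by positivity
    linarith
  have hlv : ∀ (t : Fin (n - 1)) (j : Fin n), lvec n M ((t : ℕ) + 1) j =
      -M / ((n : ℝ) - 1) + M' * if (j : ℕ) = t + 1 then 1 else 0 := by
    intro t j
    unfold lvec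
    split_ifs
    · rw [hM']; ring
    · ring
  rcases Nat.eq_zero_or_pos (k : ℕ) with hk | hk
  · simp only [hk, not_lt_zero, if_false, sub_self, Finset.sum_const_zero]
    simp only [Nat.one_ne_zero, nonpos_iff_eq_zero, false_and, if_false, sub_zero]
    positivity
  have hterm : ∀ t : Fin (n - 1),
      ((if (t : ℕ) < (k : ℕ) then Real.log (y t i) else 0) -
        if (t : ℕ) < (k : ℕ) then Real.log (y t k) else 0) ≤
      2 * R + M' * ((if (t : ℕ) < k ∧ (i : ℕ) = t + 1 then 1 else 0) -
        if t = (⟨k - 1, by omega⟩ : Fin (n - 1)) then 1 else 0) := by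
    intro t
    have h1 := abs_le.1 (hl t i)
    have h2 := abs_le.1 (hl t k)
    rw [hlv] at h1 h2
    have h3 : (t = (⟨k - 1, by omega⟩ : Fin (n - 1))) ↔ (k : ℕ) = t + 1 := by
      rw [Fin.ext_iff]
      simp only
      omega
    simp only [h3]
    by_cases htk : (t : ℕ) < k
    · simp only [htk, true_and, if_true]
      linarith [h1.2, h2.1]
    · have : ¬ (k : ℕ) = t + 1 := by omega
      simp only [htk, this, false_and, if_false]
      linarith
  refine (Finset.sum_le_sum fun t _ => hterm t).trans ?_
  rw [Finset.sum_add_distrib, ← Finset.mul_sum Finset.univ _ M', Finset.sum_sub_distrib,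
    Finset.sum_ite_eq']
  simp only [Finset.mem_univ, if_true, Finset.sum_const, Finset.card_univ, Fintype.card_fin,
    nsmul_eq_mul]
  -- The sum counts the `t < k` with `i = t + 1`: one if `1 ≤ i ≤ k`, none otherwise.
  have hind : (∑ t : Fin (n - 1), if (t : ℕ) < k ∧ (i : ℕ) = t + 1 then (1 : ℝ) else 0) ≤
      1 - if 1 ≤ (k : ℕ) ∧ ¬ (1 ≤ (i : ℕ) ∧ (i : ℕ) ≤ k) then 1 else 0 := by
    by_cases hi : 1 ≤ (i : ℕ) ∧ (i : ℕ) ≤ k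
    · rw [if_neg (by tauto), sub_zero, Finset.sum_boole]
      have : (Finset.univ.filter fun t : Fin (n - 1) => (t : ℕ) < k ∧ (i : ℕ) = t + 1).card ≤ 1 := by
        rw [Finset.card_le_one]
        intro a ha b hb
        simp only [Finset.mem_filter] at ha hb
        ext
        omega
      exact_mod_cast this
    · rw [if_pos ⟨hk, hi⟩, sub_self, Finset.sum_eq_zero]
      intro t _
      rw [if_neg]
      omega
  have hcast : ((n - 1 : ℕ) : ℝ) ≤ n := by exact_mod_cast Nat.sub_le n 1
  have hfin := mul_le_mul_of_nonneg_left hind (hM.trans hMM)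
  split_ifs at hfin ⊢ <;> nlinarith

/-- A determinant with positive diagonal is positive as soon as each of the other terms of its
Leibniz expansion is smaller than the diagonal term by a factor exceeding `n!`. -/
lemma det_pos_of_dominant {n : ℕ} (A : Matrix (Fin n) (Fin n) ℝ) (hA : ∀ i k, 0 < A i k) (c : ℝ)
    (hc0 : 0 ≤ c) (hc : c * n.factorial < 1)
    (h : ∀ ρ : Equiv.Perm (Fin n), ρ ≠ 1 → ∏ k, A (ρ k) k ≤ c * ∏ k, A k k) : 0 < A.det := by
  have hP : 0 < ∏ k, A k k := Finset.prod_pos fun k _ => hA k k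
  rw [Matrix.det_apply', ← Finset.add_sum_erase _ _ (Finset.mem_univ 1)]
  have hb : |∑ ρ ∈ Finset.univ.erase (1 : Equiv.Perm (Fin n)),
      ((Equiv.Perm.sign ρ : ℤ) : ℝ) * ∏ k, A (ρ k) k| ≤ n.factorial * (c * ∏ k, A k k) := by
    refine (Finset.abs_sum_le_sum_abs _ _).trans ?_
    have h1 : ∀ ρ ∈ Finset.univ.erase (1 : Equiv.Perm (Fin n)),
        |((Equiv.Perm.sign ρ : ℤ) : ℝ) * ∏ k, A (ρ k) k| ≤ c * ∏ k, A k k := by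
      intro ρ hρ
      have hs : |((Equiv.Perm.sign ρ : ℤ) : ℝ)| = 1 := by
        rcases Int.units_eq_one_or (Equiv.Perm.sign ρ) with h | h <;> simp [h]
      rw [abs_mul, hs, one_mul, abs_of_pos (Finset.prod_pos fun k _ => hA _ _)]
      exact h ρ (Finset.ne_of_mem_erase hρ)
    refine (Finset.sum_le_card_nsmul _ _ _ h1).trans ?_
    rw [nsmul_eq_mul]
    refine mul_le_mul_of_nonneg_right ?_ (mul_nonneg hc0 hP.le)
    have := Finset.card_le_univ (Finset.univ.erase (1 : Equiv.Perm (Fin n)))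
    rw [Fintype.card_perm, Fintype.card_fin] at this
    exact_mod_cast this
  have hb' := (abs_le.1 hb).1
  simp only [Equiv.Perm.sign_one, Units.val_one, Int.cast_one, one_mul, Equiv.Perm.coe_one, id]
  nlinarith

lemma det_chain_pos {n : ℕ} (hn : 2 ≤ n) {y : Fin (n - 1) → Fin n → ℝ} {R M : ℝ}
    (hR : 0 ≤ R) (hM : 2 * (n : ℝ) ^ 2 * R + n.factorial ≤ M) (hy : ∀ t i, 0 < y t i)
    (hl : ∀ t i, |Real.log (y t i) - lvec n M ((t : ℕ) + 1) i| ≤ R) :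
    0 < (Matrix.of fun i k : Fin n => chain n y k i).det := by
  have hM0 : 0 ≤ M := le_trans (by positivity) hM
  refine det_pos_of_dominant _ (fun i k => chain_pos hy k i) (Real.exp (2 * (n : ℝ) ^ 2 * R - M))
    (Real.exp_pos _).le ?_ ?_
  · have h1 : Real.exp (2 * (n : ℝ) ^ 2 * R - M) ≤ Real.exp (-(n.factorial : ℝ)) :=
      Real.exp_le_exp.2 (by linarith)
    have h2 : (n.factorial : ℝ) < Real.exp n.factorial := by
      linarith [Real.add_one_le_exp (n.factorial : ℝ)]
    have h3 : (0 : ℝ) < n.factorial := by exact_mod_cast n.factorial_pos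
    rw [Real.exp_neg] at h1
    calc _ ≤ (Real.exp n.factorial)⁻¹ * n.factorial := by gcongr
      _ < 1 := by rw [inv_mul_lt_one₀ (Real.exp_pos _)]; exact h2
  · intro ρ hρ
    simp only [Matrix.of_apply]
    obtain ⟨k₀, hk₀, hk₁⟩ : ∃ k : Fin n, 1 ≤ (k : ℕ) ∧ ¬ (1 ≤ (ρ k : ℕ) ∧ (ρ k : ℕ) ≤ k) := by
      by_contra! hcon
      exact hρ (perm_eq_one_of_le ρ fun k hk => by
        by_contra hc
        exact hc ⟨by by_contra h; have := hcon k hk; omega, by have := hcon k hk; omega⟩)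
    have hpos : ∀ k i : Fin n, chain n y k i ≠ 0 := fun k i => (chain_pos hy k i).ne'
    have hP : 0 < ∏ k, chain n y k (ρ k) := Finset.prod_pos fun k _ => chain_pos hy k _
    have hP' : 0 < ∏ k, chain n y k k := Finset.prod_pos fun k _ => chain_pos hy k _
    rw [← Real.log_le_log_iff hP (mul_pos (Real.exp_pos _) hP'),
      Real.log_mul (Real.exp_pos _).ne' hP'.ne', Real.log_exp,
      Real.log_prod fun k _ => hpos _ _, Real.log_prod fun k _ => hpos _ _,
      ← sub_le_iff_le_add, ← Finset.sum_sub_distrib]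
    calc _ ≤ ∑ k : Fin n, (2 * n * R - if k = k₀ then M else 0) := by
          refine Finset.sum_le_sum fun k _ =>
            (log_chain_sub_le hn hR hM0 hy hl k (ρ k)).trans ?_
          by_cases hk : k = k₀
          · subst hk
            rw [if_pos ⟨hk₀, hk₁⟩, if_pos rfl]
          · rw [if_neg hk]
            split_ifs <;> linarith
      _ = _ := by
          rw [Finset.sum_sub_distrib, Finset.sum_ite_eq']
          simp
          ring

/-- The sign condition in general: permuting the columns by `τ` amounts to permuting the rows by a
conjugate of `τ`, after which the chain is the one for the identity. -/
lemma permSignCond_of_near {n : ℕ} (hn : 2 ≤ n) {w : Fin n → Fin n → ℝ} {R M : ℝ}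
    (hR : 0 ≤ R) (hM : 2 * (n : ℝ) ^ 2 * R + n.factorial ≤ M) (hw : ∀ s i, 0 < w s i)
    (hl : ∀ s i, |Real.log (w s i) - lvec n M (finRotate n s) i| ≤ R) : permSignCond n w := by
  intro τ
  set c := finRotate n
  let ρ : Equiv.Perm (Fin n) := c * τ * c⁻¹
  let ι : Fin (n - 1) → Fin n := Fin.castLE (Nat.sub_le n 1)
  have hc : ∀ t : Fin (n - 1), (c (ι t) : ℕ) = t + 1 := by
    obtain ⟨m, rfl⟩ : ∃ m, n = m + 1 := ⟨n - 1, by omega⟩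
    intro t
    exact congrArg Fin.val (finRotate_of_lt (n := m) (k := t) t.2)
  have hpos := det_chain_pos hn (y := fun t i => w (τ (ι t)) (ρ i)) hR hM (fun t i => hw _ _) (by
    intro t i
    convert hl (τ (ι t)) (ρ i) using 3
    unfold lvec
    have : ((i : ℕ) = t + 1) ↔ ((ρ i : ℕ) = c (τ (ι t))) := by
      rw [← hc t, ← Fin.ext_iff, ← Fin.ext_iff]
      simp only [ρ, Equiv.Perm.mul_apply, c.apply_eq_iff_eq, τ.apply_eq_iff_eq]
      exact (Equiv.Perm.inv_eq_iff_eq).symm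
    simp only [this])
  set B : Matrix (Fin n) (Fin n) ℝ :=
    Matrix.of fun i k : Fin n => chain n (fun t => w (τ (ι t))) k i with hB
  have hsub : (Matrix.of fun i k : Fin n => chain n (fun t i => w (τ (ι t)) (ρ i)) k i)
      = B.submatrix ρ id := rfl
  have hsign : Equiv.Perm.sign ρ = Equiv.Perm.sign τ := by
    rw [map_mul, map_mul, map_inv, mul_right_comm, mul_inv_cancel, one_mul]
  rw [hsub, Matrix.det_permute, hsign] at hpos
  change Real.sign B.det = _
  rcases Int.units_eq_one_or (Equiv.Perm.sign τ) with h | h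
  · rw [h] at hpos ⊢
    rw [Real.sign_of_pos (by simpa using hpos)]
    simp
  · rw [h] at hpos ⊢
    rw [Real.sign_of_neg (by simpa using hpos)]
    simp

/-! ### Choice of the units -/

lemma sum_lvec {n : ℕ} (hn : 2 ≤ n) (M : ℝ) (s : Fin n) : ∑ j, lvec n M s j = 0 := by
  have hn1 : (n : ℝ) - 1 ≠ 0 := by
    have : (2 : ℝ) ≤ n := by exact_mod_cast hn
    linarith
  have h : ∀ j : Fin n, lvec n M s j =
      -M / ((n : ℝ) - 1) + if j = s then M + M / ((n : ℝ) - 1) else 0 := by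
    intro j
    simp only [lvec, Fin.ext_iff]
    split_ifs
    · ring
    · ring
  simp only [h, Finset.sum_add_distrib, Finset.sum_ite_eq', Finset.mem_univ, if_true,
    Finset.sum_const, Finset.card_univ, Fintype.card_fin, nsmul_eq_mul]
  field_simp
  ring

lemma sum_log_piH {n : ℕ} (hn : 2 ≤ n) {F : Type} [Field F] {σ : Fin n → (F →+* ℝ)} {π : F}
    (hπ : ∀ i, 0 < σ i π) : ∑ i, Real.log (piH n F σ π i) = 0 := by
  have hP : 0 < ∏ j, σ j π := Finset.prod_pos fun j _ => hπ j
  have hn0 : (n : ℝ) ≠ 0 := by positivity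
  have h : ∀ i, Real.log (piH n F σ π i) =
      (-(1 : ℝ) / n) * Real.log (∏ j, σ j π) + Real.log (σ i π) := fun i => by
    rw [piH, Real.log_mul (Real.rpow_pos_of_pos hP _).ne' (hπ i).ne', Real.log_rpow hP]
  simp only [h, Finset.sum_add_distrib, Finset.sum_const, Finset.card_univ, Fintype.card_fin,
    nsmul_eq_mul]
  rw [Real.log_prod fun j _ => (hπ j).ne']
  field_simp
  ring

lemma uval_mul {F : Type} [Field F] [NumberField F] (u v : (𝓞 F)ˣ) :
    uval F (u * v) = uval F u * uval F v := by
  simp [uval]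

lemma uval_pow {F : Type} [Field F] [NumberField F] (u : (𝓞 F)ˣ) (m : ℕ) :
    uval F (u ^ m) = uval F u ^ m := by
  simp [uval]

lemma uval_ne_zero {F : Type} [Field F] [NumberField F] (u : (𝓞 F)ˣ) : uval F u ≠ 0 := by
  simp [uval]

/-- Every coset `a·E₊ᵐ` of norm one comes within a distance of each `l_s(M)` that is uniform in `a`,
`s` and `M`: squares of units are totally positive, so it suffices to approximate
`(l_s(M) - Log a) / 2m` by the logarithm of a unit. -/
lemma exists_pow_near {n : ℕ} (hn : 2 ≤ n) {F : Type} [Field F] [NumberField F]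
    {σ : Fin n → (F →+* ℝ)} (hdeg : Module.finrank ℚ F = n) (hinj : Function.Injective σ)
    (m : ℕ) (hm : 2 ≤ m) :
    ∃ R : ℝ, 0 < R ∧ ∀ (a : Fin n → ℝ) (M : ℝ) (s : Fin n), (∀ i, 0 < a i) →
      ∑ i, Real.log (a i) = 0 → ∃ ε ∈ totPosUnits n F σ,
        ∀ i, |Real.log (a i * σ i (uval F (ε ^ m))) - lvec n M s i| < R := by
  obtain ⟨R, hR⟩ := exists_unit_near (σ := σ) hdeg hinj
  have hm0 : (0 : ℝ) < 2 * m := by positivity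
  refine ⟨2 * m * |R| + 1, by positivity, fun a M s ha hsum => ?_⟩
  obtain ⟨u, hu⟩ := hR (fun i => (lvec n M s i - Real.log (a i)) / (2 * m)) (by
    rw [← Finset.sum_div, Finset.sum_sub_distrib, sum_lvec hn, hsum, sub_zero, zero_div])
  have hne : ∀ i, σ i (uval F u) ≠ 0 := fun i => (map_ne_zero _).2 (uval_ne_zero u)
  refine ⟨u ^ 2, fun i => ?_, fun i => ?_⟩
  · rw [uval_pow, map_pow]
    have := hne i
    positivity
  · have h1 : Real.log (a i * σ i (uval F ((u ^ 2) ^ m))) - lvec n M s i =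
        2 * m * (Real.log (σ i (uval F u)) - (lvec n M s i - Real.log (a i)) / (2 * m)) := by
      rw [uval_pow, uval_pow, map_pow, map_pow,
        Real.log_mul (ha i).ne' (pow_ne_zero _ (pow_ne_zero _ (hne i))), Real.log_pow, Real.log_pow]
      field_simp
      push_cast
      ring
    rw [h1, abs_mul, abs_of_pos hm0]
    have := mul_le_mul_of_nonneg_left ((hu i).trans (le_abs_self R)) hm0.le
    linarith

/-- One family with all the required properties, of index coprime to a prescribed `m`. The units are
chosen congruent modulo `m`-th powers to generators of `E₊`. -/
lemma exists_family {n : ℕ} (hn : 2 ≤ n) {F : Type} [Field F] [NumberField F]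
    {σ : Fin n → (F →+* ℝ)} (hdeg : Module.finrank ℚ F = n) (hinj : Function.Injective σ)
    {π : F} (hπ : ∀ i, 0 < σ i π) (m : ℕ) (hm : 2 ≤ m) :
    ∃ (R M : ℝ), 0 < R ∧ 0 < M ∧
      ∃ (f : Fin (n - 1) → totPosUnits n F σ) (fπ : Fin n → ℝ),
        inPiHOrbit n F σ π fπ ∧
        (∀ t : Fin (n - 1),
          ‖vlog n (emb n F σ (uval F ↑(f t))) - lvec n M ((t : ℕ) + 1)‖ < R) ∧
        ‖vlog n fπ - lvec n M 0‖ < R ∧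
        (Subgroup.closure (Set.range f)).FiniteIndex ∧
        Nat.Coprime (Subgroup.closure (Set.range f)).index m ∧
        permSignCond n (gfull n F σ (fun t => ↑(f t)) fπ) := by
  obtain ⟨hfg, e, he⟩ := exists_generators (σ := σ) hn hdeg
  obtain ⟨R, hR, happ⟩ := exists_pow_near (σ := σ) hn hdeg hinj m hm
  set M : ℝ := 2 * (n : ℝ) ^ 2 * R + n.factorial with hM
  have hM0 : 0 < M := by
    have : (0 : ℝ) < n.factorial := by exact_mod_cast n.factorial_pos
    positivity
  choose ε hε hεR using fun t : Fin (n - 1) =>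
    happ (fun i => σ i (uval F (e t))) M ⟨t + 1, by omega⟩ (e t).2 (sum_log_unit hdeg hinj _)
  have hpiH : ∀ i, 0 < piH n F σ π i := fun i =>
    mul_pos (Real.rpow_pos_of_pos (Finset.prod_pos fun j _ => hπ j) _) (hπ i)
  obtain ⟨ε', hε', hεR'⟩ := happ (piH n F σ π) M ⟨0, by omega⟩ hpiH (sum_log_piH hn hπ)
  let f : Fin (n - 1) → totPosUnits n F σ := fun t => e t * ⟨ε t, hε t⟩ ^ m
  let fπ : Fin n → ℝ := fun i => piH n F σ π i * σ i (uval F (ε' ^ m))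
  have hε'm : ε' ^ m ∈ totPosUnits n F σ := pow_mem hε' m
  have hf : ∀ t i, |Real.log (σ i (uval F (f t))) - lvec n M ((t : ℕ) + 1) i| < R := by
    intro t i
    have h := hεR t i
    rw [← map_mul, ← uval_mul] at h
    exact h
  have hindex : ∀ g : totPosUnits n F σ, ∃ a ∈ Subgroup.closure (Set.range f),
      ∃ x : totPosUnits n F σ, g = a * x ^ m := by
    intro g
    have hle : Subgroup.closure (Set.range e) ≤
        Subgroup.closure (Set.range f) ⊔ (powMonoidHom m).range := by
      rw [Subgroup.closure_le]
      rintro _ ⟨t, rfl⟩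
      refine Subgroup.mem_sup.2 ⟨f t, Subgroup.subset_closure ⟨t, rfl⟩,
        (⟨ε t, hε t⟩⁻¹) ^ m, ⟨⟨ε t, hε t⟩⁻¹, rfl⟩, ?_⟩
      simp [f]
    obtain ⟨a, ha, _, ⟨x, rfl⟩, h⟩ := Subgroup.mem_sup.1 (hle (he ▸ Subgroup.mem_top g))
    exact ⟨a, ha, x, h.symm⟩
  obtain ⟨hfin, hcop⟩ := index_coprime_of_pow_surj _ m hm hindex
  refine ⟨R, M, hR, hM0, f, fπ, ⟨ε' ^ m, hε'm, rfl⟩, fun t => ?_, ?_, hfin, hcop, ?_⟩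
  · exact (pi_norm_lt_iff hR).2 fun i => hf t i
  · exact (pi_norm_lt_iff hR).2 fun i => hεR' i
  · refine permSignCond_of_near hn hR.le hM.ge (fun s i => ?_) fun s i => ?_
    · unfold gfull
      split_ifs with h
      · exact (f ⟨s, h⟩).2 i
      · exact mul_pos (hpiH i) (hε'm i)
    · obtain ⟨k, rfl⟩ : ∃ k, n = k + 1 := ⟨n - 1, by omega⟩
      unfold gfull
      split_ifs with h
      · have hrot : ((finRotate (k + 1) s : Fin (k + 1)) : ℕ) = s + 1 :=
          congrArg Fin.val (finRotate_of_lt (n := k) (k := s) h)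
        rw [hrot]
        exact (hf ⟨s, h⟩ i).le
      · have hs : s = Fin.last k := by
          ext
          have := s.2
          simp only [Fin.val_last]
          omega
        subst hs
        rw [finRotate_last]
        exact (hεR' i).le

/-- there exist `R_f, R_g, M_f, M_g > 0`, totally positive units
`f₁,…,f_{n−1}, g₁,…,g_{n−1} ∈ E₊` and elements `f_π, g_π ∈ π_H·E₊` satisfying the
log-approximation bounds, such that the subgroups `V_f = ⟨f₁,…,f_{n−1}⟩` and
`V_g = ⟨g₁,…,g_{n−1}⟩` have finite and coprime indices in `E₊`, and both families
(with `f_n = f_π`, `g_n = g_π`) satisfy the sign condition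
`δ([·_{τ(1)} | ⋯ | ·_{τ(n−1)}]) = sign(τ)` for all permutations `τ` of `{1,…,n}`. -/
theorem statement4
    (n : ℕ) (hn : 2 ≤ n)
    (F : Type) [Field F] [NumberField F]
    (hdeg : Module.finrank ℚ F = n)
    (σ : Fin n → (F →+* ℝ))
    (hinj : Function.Injective σ)
    (hsurj : ∀ φ : F →+* ℝ, ∃ i, σ i = φ)
    (π : F) (hπ : ∀ i, 0 < σ i π) :
    ∃ (Rf Rg Mf Mg : ℝ), 0 < Rf ∧ 0 < Rg ∧ 0 < Mf ∧ 0 < Mg ∧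
      ∃ (f g : Fin (n - 1) → totPosUnits n F σ) (fπ gπ : Fin n → ℝ),
        inPiHOrbit n F σ π fπ ∧ inPiHOrbit n F σ π gπ ∧
        (∀ t : Fin (n - 1),
          ‖vlog n (emb n F σ (uval F ↑(f t))) - lvec n Mf ((t : ℕ) + 1)‖ < Rf) ∧
        (∀ t : Fin (n - 1),
          ‖vlog n (emb n F σ (uval F ↑(g t))) - lvec n Mg ((t : ℕ) + 1)‖ < Rg) ∧
        ‖vlog n fπ - lvec n Mf 0‖ < Rf ∧
        ‖vlog n gπ - lvec n Mg 0‖ < Rg ∧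
        (Subgroup.closure (Set.range f)).FiniteIndex ∧
        (Subgroup.closure (Set.range g)).FiniteIndex ∧
        Nat.Coprime (Subgroup.closure (Set.range f)).index
          (Subgroup.closure (Set.range g)).index ∧
        permSignCond n (gfull n F σ (fun t => ↑(f t)) fπ) ∧
        permSignCond n (gfull n F σ (fun t => ↑(g t)) gπ) := by
  obtain ⟨Rf, Mf, hRf, hMf, f, fπ, hfπ, hf, hfπ', hfi, -, hfs⟩ :=
    exists_family hn hdeg hinj hπ 2 le_rfl
  have hd : (Subgroup.closure (Set.range f)).index ≠ 0 := hfi.index_ne_zero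
  -- The factor `2` keeps the modulus at least `2` when the first index is `1`.
  obtain ⟨Rg, Mg, hRg, hMg, g, gπ, hgπ, hg, hgπ', hgi, hgc, hgs⟩ :=
    exists_family hn hdeg hinj hπ (2 * (Subgroup.closure (Set.range f)).index) (by omega)
  exact ⟨Rf, Rg, Mf, Mg, hRf, hRg, hMf, hMg, f, g, fπ, gπ, hfπ, hgπ, hf, hg, hfπ', hgπ', hfi, hgi,
    (hgc.coprime_dvd_right (Dvd.intro_left 2 rfl)).symm, hfs, hgs⟩

end
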